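/- Assume 2r < σ² and 2rK > L(σ² + 2r), and set b = 2rK/(2r + σ²) (so that b > L). Then the perpetual value function is given explicitly by V(x) = G(x) for x ∈ (0, b) and V(x) = (K − b)·b^{2r/σ²}·x^{−2r/σ²} for x ∈ [b, ∞); moreover the stopping time τ_b = inf{t ≥ 0 : X^x_t ≤ b} is optimal, i.e. V(x) = E[e^{−r·τ_b} G(X^x_{τ_b})] for every x > 0. -/

import Mathlib

open MeasureTheory ProbabilityTheory Real Set Filter

noncomputable section

/-- Geometric Brownian motion with parameters `r`, `σ`, started at `x`,
driven by the process `W`: `X^x_t = x · exp((r - σ²/2)t + σ W_t)`. -/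
def GBM {Ω : Type} (r σ x : ℝ) (W : ℝ → Ω → ℝ) (t : ℝ) (ω : Ω) : ℝ :=
  x * Real.exp ((r - σ ^ 2 / 2) * t + σ * W t ω)

/-- `W` is a standard Brownian motion with respect to the filtration `F` under the
probability measure `P`: it starts at `0`, has continuous paths, is adapted to `F`,
has Gaussian increments `W t - W s ∼ N(0, t - s)`, and its increments after time `s`
are independent of `F s`. -/
structure IsStdBM {Ω : Type} [mΩ : MeasurableSpace Ω] (P : Measure Ω)
    (F : Filtration ℝ mΩ) (W : ℝ → Ω → ℝ) : Prop where
  init : ∀ ω, W 0 ω = 0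
  cont : ∀ ω, Continuous fun t => W t ω
  adapted : ∀ t : ℝ, Measurable[F t] (W t)
  incr_law : ∀ s t : ℝ, 0 ≤ s → s ≤ t →
      Measure.map (fun ω => W t ω - W s ω) P = gaussianReal 0 (Real.toNNReal (t - s))
  incr_indep : ∀ s t : ℝ, 0 ≤ s → s ≤ t →
      Indep (MeasurableSpace.comap (fun ω => W t ω - W s ω) Real.measurableSpace) (F s) P

/-- An `ℝ≥0∞`-valued random time `τ` is a stopping time for the real-indexed
filtration `F` if `{τ ≤ t} ∈ F t` for every `t ≥ 0`. -/
def IsStoppingTimeE {Ω : Type} [mΩ : MeasurableSpace Ω] (F : Filtration ℝ mΩ)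
    (τ : Ω → ENNReal) : Prop :=
  ∀ t : ℝ, 0 ≤ t → MeasurableSet[F t] {ω | τ ω ≤ ENNReal.ofReal t}

/-- The perpetual Azéma supermartingale function `Z(x) = min{(L/x)^α, 1}`,
with `α = 2r/σ² - 1`. -/
def Zp (r σ L x : ℝ) : ℝ := min ((L / x) ^ (2 * r / σ ^ 2 - 1)) 1

/-- The perpetual gain function `G(x) = (K - x)⁺ · Z(x)`. -/
def gainP (r σ L K x : ℝ) : ℝ := max (K - x) 0 * Zp r σ L x

/-- The perpetual value function `V(x) = sup_τ E[e^{-rτ} G(X^x_τ)]`, the supremum over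
all stopping times, with the convention that the payoff vanishes on `{τ = ∞}`. -/
def valueP {Ω : Type} [mΩ : MeasurableSpace Ω] (P : Measure Ω) (F : Filtration ℝ mΩ)
    (W : ℝ → Ω → ℝ) (r σ L K x : ℝ) : ℝ :=
  ⨆ τ : {τ : Ω → ENNReal // IsStoppingTimeE F τ},
    ∫ ω in {ω | τ.1 ω ≠ ⊤},
      Real.exp (-r * (τ.1 ω).toReal) * gainP r σ L K (GBM r σ x W ((τ.1 ω).toReal) ω) ∂P

/-- The first passage time `τ_b = inf{t ≥ 0 : X^x_t ≤ b}` of the geometric Brownian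
motion `X^x` at or below the level `b`. -/
def hitTime {Ω : Type} (r σ x b : ℝ) (W : ℝ → Ω → ℝ) (ω : Ω) : ℝ :=
  sInf {t : ℝ | 0 ≤ t ∧ GBM r σ x W t ω ≤ b}

/-!
Put `β = 2r/σ²`. For `h(y) = A·y^(-β) + B·y` the process `e^{-rt} h(X_t)` is a martingale, so if
`A, B ≥ 0` and `h` majorizes the gain `G`, optional stopping (with Fatou's lemma on `{τ < ∞}`) gives
`V ≤ h`. For each `x ≤ b` there is such an `h` touching `G` at `x`, so stopping at once is optimal.
For `x ≥ b` take the `h` with `B = 0` that touches `G` at `b`: it is bounded on `[b, ∞)`, so the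
martingale stopped at `τ_b`, which is almost surely finite because `log X` drifts to `-∞`, satisfies
`E[e^{-rτ_b} G(X_{τ_b})] = h(x)`.
-/

open scoped NNReal ENNReal Topology

/-- The least multiple of `δ` that is `≥ t`; rounding a random time up to a grid turns a stopping
time into one with countably many values. -/
def gridCeil (δ t : ℝ≥0) : ℝ≥0 := ⌈t / δ⌉₊ * δ

lemma gridCeil_le_iff {δ : ℝ≥0} (hδ : 0 < δ) {s t : ℝ≥0} :
    gridCeil δ s ≤ t ↔ s ≤ ⌊t / δ⌋₊ * δ := by
  rw [gridCeil, ← le_div_iff₀ hδ, ← Nat.le_floor_iff zero_le, Nat.ceil_le, div_le_iff₀ hδ]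

lemma le_gridCeil {δ : ℝ≥0} (hδ : 0 < δ) (t : ℝ≥0) : t ≤ gridCeil δ t :=
  (div_le_iff₀ hδ).1 (Nat.le_ceil _)

lemma gridCeil_le_add {δ : ℝ≥0} (hδ : 0 < δ) (t : ℝ≥0) : gridCeil δ t ≤ t + δ := by
  rw [gridCeil, ← le_div_iff₀ hδ, add_div, div_self hδ.ne']
  exact (Nat.ceil_lt_add_one zero_le).le

lemma tendsto_gridCeil_one_div (t : ℝ≥0) :
    Tendsto (fun n : ℕ => gridCeil (1 / (n + 1 : ℝ≥0)) t) atTop (𝓝[≥] t) := by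
  have hpos (n : ℕ) : 0 < 1 / (n + 1 : ℝ≥0) := by positivity
  refine tendsto_nhdsWithin_iff.2 ⟨?_, .of_forall fun n => le_gridCeil (hpos n) t⟩
  refine tendsto_of_tendsto_of_tendsto_of_le_of_le tendsto_const_nhds
    (by simpa using tendsto_one_div_add_atTop_nhds_zero_nat.const_add t)
    (fun n => le_gridCeil (hpos n) t) fun n => gridCeil_le_add (hpos n) t

section OptionalStopping

lemma integrable_and_integral_le_of_ae_tendsto {Ω : Type*} {mΩ : MeasurableSpace Ω}
    {μ : Measure Ω} {f : ℕ → Ω → ℝ} {g : Ω → ℝ} {C : ℝ} (hint : ∀ n, Integrable (f n) μ)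
    (hnonneg : ∀ n, 0 ≤ᵐ[μ] f n) (hC : ∀ n, ∫ ω, f n ω ∂μ ≤ C)
    (hlim : ∀ᵐ ω ∂μ, Tendsto (fun n => f n ω) atTop (𝓝 (g ω))) :
    Integrable g μ ∧ ∫ ω, g ω ∂μ ≤ C := by
  have hmeas : AEStronglyMeasurable g μ :=
    aestronglyMeasurable_of_tendsto_ae atTop (fun n => (hint n).aestronglyMeasurable) hlim
  have hg : 0 ≤ᵐ[μ] g := by
    filter_upwards [hlim, ae_all_iff.2 hnonneg] with ω hω h0 using ge_of_tendsto' hω h0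
  have hC0 : 0 ≤ C := (integral_nonneg_of_ae (hnonneg 0)).trans (hC 0)
  have hfatou : ∫⁻ ω, ENNReal.ofReal (g ω) ∂μ ≤ ENNReal.ofReal C :=
    calc ∫⁻ ω, ENNReal.ofReal (g ω) ∂μ
        = ∫⁻ ω, liminf (fun n => ENNReal.ofReal (f n ω)) atTop ∂μ :=
          lintegral_congr_ae (hlim.mono fun ω hω => (ENNReal.tendsto_ofReal hω).liminf_eq.symm)
      _ ≤ liminf (fun n => ∫⁻ ω, ENNReal.ofReal (f n ω) ∂μ) atTop :=
          lintegral_liminf_le' fun n => (hint n).aemeasurable.ennreal_ofReal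
      _ ≤ liminf (fun _ => ENNReal.ofReal C) atTop := liminf_le_liminf <| .of_forall fun n => by
          rw [← ofReal_integral_eq_lintegral_ofReal (hint n) (hnonneg n)]
          exact ENNReal.ofReal_le_ofReal (hC n)
      _ = ENNReal.ofReal C := liminf_const _
  refine ⟨⟨hmeas, ?_⟩, ?_⟩
  · exact (hasFiniteIntegral_iff_ofReal hg).2 (hfatou.trans_lt ENNReal.ofReal_lt_top)
  · rw [integral_eq_lintegral_of_nonneg_ae hg hmeas]
    exact ENNReal.toReal_le_of_le_ofReal hC0 hfatou

lemma integrable_and_integral_eq_of_tendsto_condExp {Ω : Type*} {mΩ : MeasurableSpace Ω}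
    {μ : Measure Ω} [IsFiniteMeasure μ] {f : ℕ → Ω → ℝ} {g h : Ω → ℝ} (hg : Integrable g μ)
    (hf : ∀ n, ∃ m ≤ mΩ, f n =ᵐ[μ] μ[g | m])
    (hlim : ∀ᵐ ω ∂μ, Tendsto (fun n => f n ω) atTop (𝓝 (h ω))) :
    Integrable h μ ∧ ∫ ω, h ω ∂μ = ∫ ω, g ω ∂μ := by
  choose m hm hfm using hf
  have hUI : UniformIntegrable f 1 μ :=
    (hg.uniformIntegrable_condExp hm).ae_eq fun n => (hfm n).symm
  have hint (n : ℕ) : Integrable (f n) μ := memLp_one_iff_integrable.1 (hUI.memLp n)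
  have hh : Integrable h μ := hUI.integrable_of_ae_tendsto hlim
  have hL1 := tendsto_Lp_finite_of_tendsto_ae le_rfl ENNReal.one_ne_top
    (fun n => (hint n).aestronglyMeasurable) (memLp_one_iff_integrable.2 hh) hUI.unifIntegrable hlim
  refine ⟨hh, tendsto_nhds_unique (tendsto_integral_of_L1' h hh.aestronglyMeasurable
    (.of_forall hint) hL1) ?_⟩
  simp_rw [integral_congr_ae (hfm _), integral_condExp (hm _)]
  exact tendsto_const_nhds

variable {Ω : Type*} {mΩ : MeasurableSpace Ω} {μ : Measure Ω} {𝓕 : Filtration ℝ≥0 mΩ}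

lemma isStoppingTime_gridCeil {δ : ℝ≥0} (hδ : 0 < δ) {u : Ω → ℝ≥0}
    (hu : IsStoppingTime 𝓕 fun ω => (u ω : WithTop ℝ≥0)) :
    IsStoppingTime 𝓕 fun ω => (gridCeil δ (u ω) : WithTop ℝ≥0) := by
  intro t
  have hle : ⌊t / δ⌋₊ * δ ≤ t := (le_div_iff₀ hδ).1 (Nat.floor_le zero_le)
  simpa only [WithTop.coe_le_coe, gridCeil_le_iff hδ] using 𝓕.mono hle _ (hu (⌊t / δ⌋₊ * δ))

lemma ae_eq_condExp_gridCeil [IsFiniteMeasure μ] {M : ℝ≥0 → Ω → ℝ} (hM : Martingale M 𝓕 μ)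
    {u : Ω → ℝ≥0} (hu : IsStoppingTime 𝓕 fun ω => (u ω : WithTop ℝ≥0)) {δ : ℝ≥0}
    (hδ : 0 < δ) (T : ℝ≥0) :
    ∃ m : MeasurableSpace Ω, m ≤ mΩ ∧
      (fun ω => M (min (gridCeil δ (u ω)) T) ω) =ᵐ[μ] μ[M T | m] := by
  have hτ := (isStoppingTime_gridCeil hδ hu).min_const T
  have hle (ω : Ω) : min (gridCeil δ (u ω) : WithTop ℝ≥0) T ≤ T := min_le_right _ _
  have hcountable :
      (range fun ω => min (gridCeil δ (u ω) : WithTop ℝ≥0) T).Countable :=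
    (countable_range fun n : ℕ => min ((n * δ : ℝ≥0) : WithTop ℝ≥0) T).mono <| by
      rintro - ⟨ω, rfl⟩
      exact ⟨⌈u ω / δ⌉₊, rfl⟩
  refine ⟨_, hτ.measurableSpace_le_of_le hle, ?_⟩
  convert hM.stoppedValue_ae_eq_condExp_of_le_const_of_countable_range hτ hle hcountable with ω
  rw [stoppedValue, ← WithTop.coe_min, WithTop.untopA, WithTop.untopD_coe]

-- The values of `M` at the grid approximations are conditional expectations of `M T`, hence
-- uniformly integrable.
theorem integrable_and_integral_stopped_of_le_const [IsFiniteMeasure μ] {M : ℝ≥0 → Ω → ℝ}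
    (hM : Martingale M 𝓕 μ) (hcont : ∀ ω t, ContinuousWithinAt (M · ω) (Ici t) t)
    {u : Ω → ℝ≥0} (hu : IsStoppingTime 𝓕 fun ω => (u ω : WithTop ℝ≥0)) {T : ℝ≥0}
    (hT : ∀ ω, u ω ≤ T) :
    Integrable (fun ω => M (u ω) ω) μ ∧ ∫ ω, M (u ω) ω ∂μ = ∫ ω, M 0 ω ∂μ := by
  rw [← setIntegral_univ (f := M 0), hM.setIntegral_eq zero_le .univ, setIntegral_univ]
  refine integrable_and_integral_eq_of_tendsto_condExp (hM.integrable T)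
    (fun n => ae_eq_condExp_gridCeil hM hu (δ := 1 / (n + 1)) (by positivity) T)
    (.of_forall fun ω => (hcont ω (u ω)).tendsto.comp ?_)
  have hgrid := tendsto_nhdsWithin_iff.1 (tendsto_gridCeil_one_div (u ω))
  refine tendsto_nhdsWithin_iff.2 ⟨?_, hgrid.2.mono fun n hn => le_min hn (hT ω)⟩
  simpa [min_eq_left (hT ω)] using hgrid.1.min (tendsto_const_nhds (x := T))

lemma coe_min_natCast_toNNReal (a : ℝ≥0∞) (n : ℕ) : ((min a n).toNNReal : ℝ≥0∞) = min a n :=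
  ENNReal.coe_toNNReal (min_lt_of_right_lt (ENNReal.natCast_lt_top n)).ne

lemma isStoppingTime_min_natCast {τ : Ω → ℝ≥0∞} (hτ : IsStoppingTime 𝓕 τ) (n : ℕ) :
    IsStoppingTime 𝓕 fun ω => ((min (τ ω) n).toNNReal : WithTop ℝ≥0) := by
  convert hτ.min_const (n : ℝ≥0) with ω
  exact coe_min_natCast_toNNReal (τ ω) n

lemma tendsto_min_natCast_toNNReal {α : Type*} [TopologicalSpace α] (f : ℝ≥0 → α) {a : ℝ≥0∞}
    (ha : a ≠ ∞) : Tendsto (fun n : ℕ => f (min a n).toNNReal) atTop (𝓝 (f a.toNNReal)) := by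
  obtain ⟨N, hN⟩ := ENNReal.exists_nat_gt ha
  refine tendsto_const_nhds.congr' ((eventually_ge_atTop N).mono fun n hn => ?_)
  simp only [min_eq_left (hN.le.trans (Nat.cast_le.2 hn))]

lemma integrable_and_integral_stopped_min_natCast [IsFiniteMeasure μ] {M : ℝ≥0 → Ω → ℝ}
    (hM : Martingale M 𝓕 μ) (hcont : ∀ ω t, ContinuousWithinAt (M · ω) (Ici t) t)
    {τ : Ω → ℝ≥0∞} (hτ : IsStoppingTime 𝓕 τ) (n : ℕ) :
    Integrable (fun ω => M (min (τ ω) n).toNNReal ω) μ ∧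
      ∫ ω, M (min (τ ω) n).toNNReal ω ∂μ = ∫ ω, M 0 ω ∂μ := by
  refine integrable_and_integral_stopped_of_le_const hM hcont
    (isStoppingTime_min_natCast hτ n) (T := n) fun ω => ?_
  rw [← ENNReal.coe_le_coe, coe_min_natCast_toNNReal]
  exact min_le_right _ _

theorem integral_stopped_eq_of_dominated [IsFiniteMeasure μ] {M : ℝ≥0 → Ω → ℝ}
    (hM : Martingale M 𝓕 μ) (hcont : ∀ ω t, ContinuousWithinAt (M · ω) (Ici t) t)
    {τ : Ω → ℝ≥0∞} (hτ : IsStoppingTime 𝓕 τ) (hfin : ∀ᵐ ω ∂μ, τ ω ≠ ∞) {g : Ω → ℝ}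
    (hg : Integrable g μ) (hdom : ∀ ω (t : ℝ≥0), t ≤ τ ω → ‖M t ω‖ ≤ g ω) :
    ∫ ω, M (τ ω).toNNReal ω ∂μ = ∫ ω, M 0 ω ∂μ := by
  have hmin (n : ℕ) := integrable_and_integral_stopped_min_natCast hM hcont hτ n
  refine tendsto_nhds_unique (tendsto_integral_of_dominated_convergence g
    (fun n => (hmin n).1.aestronglyMeasurable) hg (fun n => .of_forall fun ω => hdom ω _ ?_) ?_) ?_
  · rw [coe_min_natCast_toNNReal]
    exact min_le_left _ _
  · filter_upwards [hfin] with ω hω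
    exact tendsto_min_natCast_toNNReal (M · ω) hω
  · simp_rw [(hmin _).2]
    exact tendsto_const_nhds

theorem setIntegral_stopped_le_of_nonneg [IsFiniteMeasure μ] {M : ℝ≥0 → Ω → ℝ}
    (hM : Martingale M 𝓕 μ) (hcont : ∀ ω t, ContinuousWithinAt (M · ω) (Ici t) t)
    (hnonneg : ∀ t ω, 0 ≤ M t ω) {τ : Ω → ℝ≥0∞} (hτ : IsStoppingTime 𝓕 τ) :
    IntegrableOn (fun ω => M (τ ω).toNNReal ω) {ω | τ ω ≠ ∞} μ ∧
    ∫ ω in {ω | τ ω ≠ ∞}, M (τ ω).toNNReal ω ∂μ ≤ ∫ ω, M 0 ω ∂μ := by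
  have hmin (n : ℕ) := integrable_and_integral_stopped_min_natCast hM hcont hτ n
  have hS : MeasurableSet {ω | τ ω ≠ ∞} := hτ.measurableSet_eq_top.compl
  have hlim : ∀ᵐ ω ∂μ.restrict {ω | τ ω ≠ ∞},
      Tendsto (fun n : ℕ => M (min (τ ω) n).toNNReal ω) atTop (𝓝 (M (τ ω).toNNReal ω)) := by
    refine (ae_restrict_iff' hS).2 (.of_forall fun ω hω => ?_)
    exact tendsto_min_natCast_toNNReal (M · ω) hω
  have hle (n : ℕ) : ∫ ω in {ω | τ ω ≠ ∞}, M (min (τ ω) n).toNNReal ω ∂μ ≤ ∫ ω, M 0 ω ∂μ :=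
    (setIntegral_le_integral (hmin n).1 (.of_forall fun ω => hnonneg _ _)).trans_eq (hmin n).2
  exact integrable_and_integral_le_of_ae_tendsto (fun n => (hmin n).1.integrableOn)
    (fun n => .of_forall fun ω => hnonneg _ _) hle hlim

end OptionalStopping

section HittingTime

variable {Ω ι E : Type*} [ConditionallyCompleteLinearOrder ι] [TopologicalSpace ι]
  [OrderTopology ι]

lemma exists_hittingAfter_eq_coe [TopologicalSpace E] {X : ι → Ω → E} {S : Set E} (hS : IsClosed S)
    {n : ι} {ω : Ω} (hX : Continuous (X · ω)) (hfin : hittingAfter X S n ω ≠ ⊤) :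
    ∃ t, n ≤ t ∧ X t ω ∈ S ∧ hittingAfter X S n ω = t := by
  have hex : ∃ j, n ≤ j ∧ X j ω ∈ S := by simpa [hittingAfter_eq_top_iff] using hfin
  have hmem := (isClosed_Ici.inter (hS.preimage hX)).csInf_mem hex ⟨n, fun _ h => h.1⟩
  exact ⟨_, hmem.1, hmem.2, by classical exact if_pos hex⟩

lemma hittingAfter_le_coe_iff [TopologicalSpace E] {X : ι → Ω → E} {S : Set E} (hS : IsClosed S)
    {n t : ι} {ω : Ω} (hX : Continuous (X · ω)) :
    hittingAfter X S n ω ≤ t ↔ ∃ s ∈ Icc n t, X s ω ∈ S := by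
  refine ⟨fun h => ?_, fun ⟨s, hs, hsS⟩ =>
    (hittingAfter_le_of_mem hs.1 hsS).trans (WithTop.coe_le_coe.2 hs.2)⟩
  obtain ⟨s, hns, hsS, hs⟩ :=
    exists_hittingAfter_eq_coe hS hX (h.trans_lt (WithTop.coe_lt_top t)).ne
  exact ⟨s, ⟨hns, WithTop.coe_le_coe.1 (hs ▸ h)⟩, hsS⟩

lemma apply_eq_of_hittingAfter_Iic_eq_coe [DenselyOrdered ι] [LinearOrder E] [TopologicalSpace E]
    [OrderClosedTopology E] {X : ι → Ω → E} {b : E} {n t : ι} {ω : Ω} (hX : Continuous (X · ω))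
    (hb : b ≤ X n ω) (ht : hittingAfter X (Iic b) n ω = t) : X t ω = b := by
  obtain ⟨u, hnu, hub, hu⟩ := exists_hittingAfter_eq_coe isClosed_Iic hX (ht ▸ WithTop.coe_ne_top)
  obtain rfl : t = u := WithTop.coe_injective (ht.symm.trans hu)
  obtain ⟨s, hs, hsb⟩ := intermediate_value_Icc' hnu hX.continuousOn ⟨hub, hb⟩
  have hts : t ≤ s := WithTop.coe_le_coe.1 (ht ▸ hittingAfter_le_of_mem hs.1 hsb.le)
  rwa [hts.antisymm hs.2]

lemma le_apply_of_le_hittingAfter_Iic [DenselyOrdered ι] [LinearOrder E] [TopologicalSpace E]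
    [OrderClosedTopology E] {X : ι → Ω → E} {b : E} {n t : ι} {ω : Ω} (hX : Continuous (X · ω))
    (hb : b ≤ X n ω) (hnt : n ≤ t) (ht : t ≤ hittingAfter X (Iic b) n ω) : b ≤ X t ω := by
  obtain hlt | heq := ht.lt_or_eq
  · have hnotMem : X t ω ∉ Iic b := notMem_of_lt_hittingAfter hlt hnt
    exact (not_le.1 hnotMem).le
  · exact (apply_eq_of_hittingAfter_Iic_eq_coe hX hb heq.symm).ge

lemma forall_notMem_iff_exists_le_infDist {T E : Type*} [TopologicalSpace T] [PseudoMetricSpace E]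
    {S : Set E} (hS : IsClosed S) (hne : S.Nonempty) {C D : Set T} (hC : IsCompact C) (hD : D ⊆ C)
    (hCD : C ⊆ closure D) {f : T → E} (hf : Continuous f) :
    (∀ s ∈ C, f s ∉ S) ↔ ∃ k : ℕ, ∀ s ∈ D, 1 / (k + 1 : ℝ) ≤ Metric.infDist (f s) S := by
  have hcont : Continuous fun s => Metric.infDist (f s) S :=
    (Metric.continuous_infDist_pt S).comp hf
  constructor
  · intro h
    obtain ⟨ε, hε, hle⟩ := hC.exists_forall_le' hcont.continuousOn (a := 0) fun s hs =>
      (hS.notMem_iff_infDist_pos hne).1 (h s hs)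
    obtain ⟨k, hk⟩ := exists_nat_one_div_lt hε
    exact ⟨k, fun s hs => hk.le.trans (hle s (hD hs))⟩
  · rintro ⟨k, hk⟩ s hs
    have hle : 1 / (k + 1 : ℝ) ≤ Metric.infDist (f s) S :=
      closure_minimal hk (isClosed_le continuous_const hcont) (hCD hs)
    exact (hS.notMem_iff_infDist_pos hne).2 (Nat.one_div_pos_of_nat.trans_le hle)

lemma isStoppingTime_hittingAfter_of_continuous [SecondCountableTopology ι]
    [PseudoMetricSpace E] [MeasurableSpace E] [OpensMeasurableSpace E] {mΩ : MeasurableSpace Ω}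
    {𝓕 : Filtration ι mΩ} {X : ι → Ω → E}
    (hX : Adapted 𝓕 X) (hcont : ∀ ω, Continuous (X · ω)) {S : Set E} (hS : IsClosed S) (n : ι) :
    IsStoppingTime 𝓕 (hittingAfter X S n) := by
  obtain rfl | hne := S.eq_empty_or_nonempty
  · simp [IsStoppingTime, hittingAfter_empty]
  intro t
  obtain ⟨D, hDsub, hDc, hDdense⟩ :=
    (TopologicalSpace.IsSeparable.of_separableSpace (Icc n t)).exists_countable_dense_subset
  have hcompl : {ω | hittingAfter X S n ω ≤ t}ᶜ =
      ⋃ k : ℕ, ⋂ s ∈ D, {ω | 1 / (k + 1 : ℝ) ≤ Metric.infDist (X s ω) S} := by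
    ext ω
    simpa [hittingAfter_le_coe_iff hS (hcont ω)] using
      forall_notMem_iff_exists_le_infDist hS hne isCompact_Icc hDsub hDdense (hcont ω)
  refine MeasurableSet.of_compl ?_
  rw [hcompl]
  refine .iUnion fun k => .biInter hDc fun s hs => ?_
  have hmeas : Measurable[𝓕 t] fun ω => Metric.infDist (X s ω) S :=
    measurable_infDist.comp ((hX s).mono (𝓕.mono (hDsub hs).2) le_rfl)
  exact hmeas measurableSet_Ici

end HittingTime

/-- The restriction of a real-indexed filtration to nonnegative times, the index set over which
martingales and stopping times are considered. -/
def restrictNNReal {Ω : Type*} {mΩ : MeasurableSpace Ω} (F : Filtration ℝ mΩ) :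
    Filtration ℝ≥0 mΩ where
  seq t := F t
  mono' _ _ h := F.mono (NNReal.coe_le_coe.2 h)
  le' t := F.le t

/-- The exponential martingale `exp (θ W_t - θ² t / 2)` of a Brownian motion `W`. -/
def expMart {Ω : Type*} (W : ℝ → Ω → ℝ) (θ t : ℝ) (ω : Ω) : ℝ :=
  exp (θ * W t ω - θ ^ 2 * t / 2)

lemma isStoppingTimeE_iff {Ω : Type} {mΩ : MeasurableSpace Ω} {F : Filtration ℝ mΩ}
    {τ : Ω → ℝ≥0∞} : IsStoppingTimeE F τ ↔ IsStoppingTime (restrictNNReal F) τ := by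
  refine ⟨fun h t => ?_, fun h t ht => ?_⟩
  · have hmeas := h t t.coe_nonneg
    rwa [ENNReal.ofReal_coe_nnreal] at hmeas
  · lift t to ℝ≥0 using ht
    rw [ENNReal.ofReal_coe_nnreal]
    exact h t

namespace IsStdBM

variable {Ω : Type} {mΩ : MeasurableSpace Ω} {P : Measure Ω} {F : Filtration ℝ mΩ}
  {W : ℝ → Ω → ℝ}

lemma measurable (hW : IsStdBM P F W) (t : ℝ) : Measurable (W t) :=
  (hW.adapted t).mono (F.le t) le_rfl

lemma mgf_increment (hW : IsStdBM P F W) (θ : ℝ) {s t : ℝ} (hs : 0 ≤ s) (hst : s ≤ t) :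
    mgf (fun ω => W t ω - W s ω) P θ = exp (θ ^ 2 * (t - s) / 2) := by
  rw [mgf_gaussianReal (hW.incr_law s t hs hst), Real.coe_toNNReal _ (sub_nonneg.2 hst)]
  congr 1
  ring

lemma measurable_expMart (hW : IsStdBM P F W) (θ t : ℝ) : Measurable[F t] (expMart W θ t) :=
  measurable_exp.comp (((hW.adapted t).const_mul θ).sub_const _)

variable [IsProbabilityMeasure P]

lemma integrable_exp_increment (hW : IsStdBM P F W) (θ : ℝ) {s t : ℝ} (hs : 0 ≤ s)
    (hst : s ≤ t) : Integrable (fun ω => exp (θ * (W t ω - W s ω))) P :=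
  mgf_pos_iff.1 (by rw [hW.mgf_increment θ hs hst]; positivity)

lemma integrable_expMart (hW : IsStdBM P F W) (θ : ℝ) {t : ℝ} (ht : 0 ≤ t) :
    Integrable (expMart W θ t) P := by
  have hint := (hW.integrable_exp_increment θ le_rfl ht).div_const (exp (θ ^ 2 * t / 2))
  simp only [hW.init, sub_zero, ← exp_sub] at hint
  exact hint

lemma condExp_exp_increment (hW : IsStdBM P F W) (θ : ℝ) {s t : ℝ} (hs : 0 ≤ s) (hst : s ≤ t) :
    P[fun ω => exp (θ * (W t ω - W s ω)) | F s] =ᵐ[P] fun _ => exp (θ ^ 2 * (t - s) / 2) := by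
  rw [← hW.mgf_increment θ hs hst]
  have hmeas : Measurable fun ω => W t ω - W s ω := (hW.measurable t).sub (hW.measurable s)
  exact condExp_indep_eq hmeas.comap_le (F.le s)
    (measurable_exp.comp ((comap_measurable _).const_mul θ)).stronglyMeasurable
    (hW.incr_indep s t hs hst)

theorem martingale_expMart (hW : IsStdBM P F W) (θ : ℝ) :
    Martingale (fun t : ℝ≥0 => expMart W θ t) (restrictNNReal F) P := by
  refine ⟨fun t => (hW.measurable_expMart θ t).stronglyMeasurable, fun s t hst => ?_⟩
  have hst' : (s : ℝ) ≤ t := hst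
  let c : ℝ := exp (θ ^ 2 * (t - s) / 2)
  have hfactor : expMart W θ t =
      (fun ω => expMart W θ s ω / c) * fun ω => exp (θ * (W t ω - W s ω)) := by
    ext ω
    simp only [expMart, Pi.mul_apply, c, ← exp_sub, ← exp_add]
    ring_nf
  have hpull := condExp_mul_of_stronglyMeasurable_left (m := F s) (μ := P)
    ((hW.measurable_expMart θ s).div_const c).stronglyMeasurable
    (hfactor ▸ hW.integrable_expMart θ t.coe_nonneg)
    (hW.integrable_exp_increment θ s.coe_nonneg hst')
  change P[expMart W θ t | F s] =ᵐ[P] expMart W θ s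
  filter_upwards [hfactor ▸ hpull, hW.condExp_exp_increment θ s.coe_nonneg hst'] with ω hω hD
  rw [hω, Pi.mul_apply, hD, div_mul_cancel₀ _ (exp_ne_zero _)]

end IsStdBM

section GBM

variable {Ω : Type} {r σ x : ℝ} {W : ℝ → Ω → ℝ}

lemma GBM_pos (hx : 0 < x) (t : ℝ) (ω : Ω) : 0 < GBM r σ x W t ω :=
  mul_pos hx (exp_pos _)

lemma GBM_div (z t : ℝ) (ω : Ω) : GBM r σ x W t ω / z = GBM r σ (x / z) W t ω :=
  mul_div_right_comm _ _ _

-- The hypothesis is the characteristic equation of `σ² / 2 * y² * h'' + r * y * h' = r * h`.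
lemma exp_neg_mul_GBM_rpow {p : ℝ} (hp : σ ^ 2 / 2 * p * (p - 1) + r * p = r) (hx : 0 < x)
    (t : ℝ) (ω : Ω) :
    exp (-r * t) * GBM r σ x W t ω ^ p = x ^ p * expMart W (p * σ) t ω := by
  have hexponent : -r * t + ((r - σ ^ 2 / 2) * t + σ * W t ω) * p =
      p * σ * W t ω - (p * σ) ^ 2 * t / 2 := by
    linear_combination t * hp
  rw [GBM, mul_rpow hx.le (exp_pos _).le, ← exp_mul, mul_left_comm, ← exp_add, hexponent, expMart]

end GBM

/-- The solution of `σ² / 2 * y² * h'' + r * y * h' = r * h` with coefficients `A` and `B`, where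
`β = 2 * r / σ²`, normalised so that its value at `z` is `A + B`. -/
def harmonicFun (β z A B y : ℝ) : ℝ :=
  A * (y / z) ^ (-β) + B * (y / z)

lemma harmonicFun_self {β z A B : ℝ} (hz : z ≠ 0) : harmonicFun β z A B z = A + B := by
  rw [harmonicFun, div_self hz, one_rpow, mul_one, mul_one]

lemma exp_neg_mul_harmonicFun_GBM {Ω : Type} {r σ x β z : ℝ} {W : ℝ → Ω → ℝ}
    (hβ : β * σ ^ 2 = 2 * r) (hx : 0 < x) (hz : 0 < z) (A B t : ℝ) (ω : Ω) :
    exp (-r * t) * harmonicFun β z A B (GBM r σ x W t ω) =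
      A * (x / z) ^ (-β) * expMart W (-β * σ) t ω + B * (x / z) * expMart W σ t ω := by
  have hneg := exp_neg_mul_GBM_rpow (r := r) (σ := σ) (p := -β) (W := W)
    (by linear_combination (β + 1) / 2 * hβ) (div_pos hx hz) t ω
  have hone := exp_neg_mul_GBM_rpow (r := r) (σ := σ) (p := 1) (W := W) (by ring)
    (div_pos hx hz) t ω
  rw [rpow_one, rpow_one, one_mul] at hone
  rw [harmonicFun, GBM_div]
  linear_combination A * hneg + B * hone

namespace IsStdBM

variable {Ω : Type} {mΩ : MeasurableSpace Ω} {P : Measure Ω} {F : Filtration ℝ mΩ}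
  {W : ℝ → Ω → ℝ} {r σ x β z : ℝ}

lemma GBM_zero (hW : IsStdBM P F W) (ω : Ω) : GBM r σ x W 0 ω = x := by
  simp [GBM, hW.init ω]

lemma continuous_GBM (hW : IsStdBM P F W) (ω : Ω) :
    Continuous fun t : ℝ≥0 => GBM r σ x W t ω := by
  have hcont := hW.cont ω
  unfold GBM
  fun_prop

lemma adapted_GBM (hW : IsStdBM P F W) :
    Adapted (restrictNNReal F) fun t : ℝ≥0 => GBM r σ x W t := fun t =>
  (measurable_exp.comp (((hW.adapted t).const_mul σ).const_add _)).const_mul x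

lemma continuous_expMart (hW : IsStdBM P F W) (θ : ℝ) (ω : Ω) :
    Continuous fun t : ℝ≥0 => expMart W θ t ω := by
  have hcont := hW.cont ω
  unfold expMart
  fun_prop

lemma continuous_discounted_harmonicFun (hW : IsStdBM P F W) (hβ : β * σ ^ 2 = 2 * r) (hx : 0 < x)
    (hz : 0 < z) (A B : ℝ) (ω : Ω) :
    Continuous fun t : ℝ≥0 => exp (-r * t) * harmonicFun β z A B (GBM r σ x W t ω) := by
  simp only [exp_neg_mul_harmonicFun_GBM hβ hx hz]
  exact ((hW.continuous_expMart _ ω).const_mul _).add ((hW.continuous_expMart _ ω).const_mul _)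

lemma mgf_apply (hW : IsStdBM P F W) (θ : ℝ) {t : ℝ} (ht : 0 ≤ t) :
    mgf (W t) P θ = exp (θ ^ 2 * t / 2) := by
  simpa only [hW.init, sub_zero] using hW.mgf_increment θ le_rfl ht

variable [IsProbabilityMeasure P]

lemma martingale_discounted_harmonicFun (hW : IsStdBM P F W) (hβ : β * σ ^ 2 = 2 * r) (hx : 0 < x)
    (hz : 0 < z) (A B : ℝ) :
    Martingale (fun (t : ℝ≥0) ω => exp (-r * t) * harmonicFun β z A B (GBM r σ x W t ω))
      (restrictNNReal F) P := by
  simp only [exp_neg_mul_harmonicFun_GBM hβ hx hz]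
  exact ((hW.martingale_expMart (-β * σ)).smul (A * (x / z) ^ (-β))).add
    ((hW.martingale_expMart σ).smul (B * (x / z)))

lemma measureReal_add_mul_le (hW : IsStdBM P F W) (c : ℝ) {m : ℝ} (hm : 0 ≤ m) {t : ℝ}
    (ht : 0 ≤ t) : P.real {ω | c + m * t ≤ W t ω} ≤ exp (-(m * c) - m ^ 2 / 2 * t) := by
  have hint : Integrable (fun ω => exp (m * W t ω)) P :=
    mgf_pos_iff.1 (by rw [hW.mgf_apply m ht]; positivity)
  refine (measure_ge_le_exp_mul_mgf _ hm hint).trans_eq ?_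
  rw [hW.mgf_apply m ht, ← exp_add]
  ring_nf

lemma ae_exists_lt_add_mul (hW : IsStdBM P F W) (c : ℝ) {m : ℝ} (hm : 0 < m) :
    ∀ᵐ ω ∂P, ∃ t : ℝ≥0, W t ω < c + m * t := by
  rw [ae_iff, ← measureReal_eq_zero_iff]
  refine le_antisymm ?_ measureReal_nonneg
  have htail : Tendsto (fun n : ℕ => exp (-(m * c) - m ^ 2 / 2 * n)) atTop (𝓝 0) :=
    tendsto_exp_atBot.comp <| tendsto_const_nhds.add_atBot <| tendsto_neg_atTop_atBot.comp <|
      tendsto_natCast_atTop_atTop.const_mul_atTop (by positivity)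
  refine ge_of_tendsto' htail fun n => (measureReal_mono ?_).trans
    (hW.measureReal_add_mul_le c hm.le n.cast_nonneg)
  intro ω hω
  push Not at hω
  exact hω n

lemma ae_exists_GBM_le (hW : IsStdBM P F W) (hσ : 0 < σ) (hvol : 2 * r < σ ^ 2) (hx : 0 < x)
    {b : ℝ} (hb : 0 < b) : ∀ᵐ ω ∂P, ∃ t : ℝ≥0, GBM r σ x W t ω ≤ b := by
  have hslope : 0 < (σ ^ 2 / 2 - r) / σ := div_pos (by linarith) hσ
  filter_upwards [hW.ae_exists_lt_add_mul (log (b / x) / σ) hslope] with ω ⟨t, ht⟩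
  have hdrift : (r - σ ^ 2 / 2) * t + σ * W t ω ≤ log (b / x) := by
    have := mul_lt_mul_of_pos_left ht hσ
    field_simp at this
    linarith
  refine ⟨t, ?_⟩
  rwa [GBM, ← le_div_iff₀' hx, ← le_log_iff_exp_le (div_pos hb hx)]

end IsStdBM

section Majorants

variable {β s : ℝ}

lemma one_sub_mul_sub_one_le_rpow_neg (hβ : 0 ≤ β) (hs : 0 < s) :
    1 - β * (s - 1) ≤ s ^ (-β) :=
  calc 1 - β * (s - 1)
      ≤ log s * -β + 1 := by linarith [mul_le_mul_of_nonneg_left (log_le_sub_one_of_pos hs) hβ]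
    _ ≤ s ^ (-β) := by
      rw [rpow_def_of_pos hs]
      exact add_one_le_exp _

lemma rpow_neg_mul_le_self (hβ : 0 ≤ β) (hs : 0 < s) : s ^ (-β) * ((1 + β) * s - β) ≤ s := by
  have hbernoulli : 1 + (1 + β) * (s - 1) ≤ (1 + (s - 1)) ^ (1 + β) :=
    one_add_mul_self_le_rpow_one_add (by linarith) (by linarith)
  calc s ^ (-β) * ((1 + β) * s - β)
      = s ^ (-β) * (1 + (1 + β) * (s - 1)) := by ring
    _ ≤ s ^ (-β) * (1 + (s - 1)) ^ (1 + β) :=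
      mul_le_mul_of_nonneg_left hbernoulli (rpow_nonneg hs.le _)
    _ = s := by rw [add_sub_cancel, ← rpow_add hs, neg_add_cancel_comm_assoc, rpow_one]

variable {z A B y K L b : ℝ}

lemma harmonicFun_nonneg (hz : 0 < z) (hA : 0 ≤ A) (hB : 0 ≤ B) (hy : 0 ≤ y) :
    0 ≤ harmonicFun β z A B y := by
  unfold harmonicFun
  positivity

lemma harmonicFun_zero_right_le (hβ : 0 ≤ β) (hz : 0 < z) (hA : 0 ≤ A) (hzy : z ≤ y) :
    harmonicFun β z A 0 y ≤ A := by
  rw [harmonicFun, zero_mul, add_zero]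
  exact mul_le_of_le_one_right hA
    (rpow_le_one_of_one_le_of_nonpos ((one_le_div hz).2 hzy) (neg_nonpos.2 hβ))

lemma two_mul_le_of_mul_one_add_eq (hβ : 0 < β) (hβ1 : β ≤ 1) (hb0 : 0 ≤ b)
    (hb : b * (1 + β) = β * K) : 2 * b ≤ K := by
  refine le_of_mul_le_mul_left ?_ hβ
  calc β * (2 * b) = b * (β + β) := by ring
    _ ≤ b * (1 + β) := by gcongr
    _ = β * K := hb

lemma mul_harmonicFun (c : ℝ) :
    c * harmonicFun β z A B y = harmonicFun β z (c * A) (c * B) y := by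
  unfold harmonicFun
  ring

-- By the choice of `b`, the right-hand side is tangent to `K - y` at `y = z`.
lemma max_sub_zero_le_harmonicFun (hβ : 0 ≤ β) (hb : b * (1 + β) = β * K) (hbK : b ≤ K)
    (hz : 0 < z) (hzb : z ≤ b) (hy : 0 < y) :
    max (K - y) 0 ≤ harmonicFun β z (K - b) (b - z) y := by
  refine max_le ?_ (harmonicFun_nonneg hz (sub_nonneg.2 hbK) (sub_nonneg.2 hzb) hy.le)
  have hyz : y / z * z = y := div_mul_cancel₀ y hz.ne'
  calc K - y = (K - b) * (1 - β * (y / z - 1)) + (b - z) * (y / z) := by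
        linear_combination (1 - y / z) * hb + hyz
    _ ≤ harmonicFun β z (K - b) (b - z) y := by
        have hbernoulli := one_sub_mul_sub_one_le_rpow_neg hβ (div_pos hy hz)
        have := mul_le_mul_of_nonneg_left hbernoulli (sub_nonneg.2 hbK)
        unfold harmonicFun
        linarith

-- With `s = y / z`, Bernoulli's inequality for `s ^ (1 + β)` leaves the excess `z * (s - 1) ^ 2`.
lemma sub_mul_rpow_le_harmonicFun (hβ : 0 ≤ β) (hz : 0 < z) (hzK : 2 * z ≤ K) (hy : 0 < y) :
    (K - y) * (y / z) ^ (1 - β) ≤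
      harmonicFun β z ((β * (K - z) + z) / (1 + β)) ((K - 2 * z) / (1 + β)) y := by
  have hs : 0 < y / z := div_pos hy hz
  have hbernoulli := mul_le_mul_of_nonneg_left (rpow_neg_mul_le_self hβ hs) (sub_nonneg.2 hzK)
  have hexcess : 0 ≤ (1 + β) * (y / z) ^ (-β) * z * (y / z - 1) ^ 2 := by positivity
  have hyz : y / z * z = y := div_mul_cancel₀ y hz.ne'
  rw [harmonicFun, sub_eq_add_neg 1 β, rpow_add hs, rpow_one]
  generalize y / z = s at *
  subst hyz
  rw [div_mul_eq_mul_div, div_mul_eq_mul_div, ← add_div, le_div_iff₀ (by positivity)]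
  linarith

lemma max_sub_zero_mul_rpow_le_harmonicFun (hβ : 0 ≤ β) (hL : 0 < L) (hz : 0 < z)
    (hzK : 2 * z ≤ K) (hy : 0 < y) :
    max (K - y) 0 * (y / L) ^ (1 - β) ≤ (z / L) ^ (1 - β) *
      harmonicFun β z ((β * (K - z) + z) / (1 + β)) ((K - 2 * z) / (1 + β)) y := by
  have hKz : 0 ≤ K - z := by linarith
  have hsplit : (y / L) ^ (1 - β) = (z / L) ^ (1 - β) * (y / z) ^ (1 - β) := by
    rw [← mul_rpow (by positivity) (by positivity), mul_comm, div_mul_div_cancel₀ hz.ne']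
  rw [hsplit, mul_left_comm]
  refine mul_le_mul_of_nonneg_left ?_ (by positivity)
  rw [max_mul_of_nonneg _ _ (by positivity), zero_mul]
  exact max_le (sub_mul_rpow_le_harmonicFun hβ hz hzK hy)
    (harmonicFun_nonneg hz (by positivity) (div_nonneg (by linarith) (by positivity)) hy.le)

end Majorants

section Gain

variable {r σ L K b y z : ℝ}

lemma Zp_eq_min : Zp r σ L y = min ((y / L) ^ (1 - 2 * r / σ ^ 2)) 1 := by
  rw [Zp, ← inv_div, ← rpow_neg_eq_inv_rpow, neg_sub]

lemma Zp_eq_one (hvol : 2 * r / σ ^ 2 ≤ 1) (hL : 0 < L) (hLy : L ≤ y) : Zp r σ L y = 1 := by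
  rw [Zp_eq_min]
  exact min_eq_right (one_le_rpow ((one_le_div hL).2 hLy) (sub_nonneg.2 hvol))

lemma Zp_eq_rpow (hvol : 2 * r / σ ^ 2 ≤ 1) (hL : 0 < L) (hy : 0 < y) (hyL : y ≤ L) :
    Zp r σ L y = (y / L) ^ (1 - 2 * r / σ ^ 2) := by
  rw [Zp_eq_min]
  exact min_eq_left
    (rpow_le_one (by positivity) ((div_le_one hL).2 hyL) (sub_nonneg.2 hvol))

lemma gainP_nonneg (hL : 0 < L) (hy : 0 < y) : 0 ≤ gainP r σ L K y :=
  mul_nonneg (le_max_right _ _) (le_min (rpow_nonneg (div_pos hL hy).le _) zero_le_one)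

lemma gainP_le_max : gainP r σ L K y ≤ max (K - y) 0 :=
  mul_le_of_le_one_right (le_max_right _ _) (min_le_right _ _)

lemma gainP_le_mul_rpow :
    gainP r σ L K y ≤ max (K - y) 0 * (y / L) ^ (1 - 2 * r / σ ^ 2) := by
  rw [gainP, Zp_eq_min]
  exact mul_le_mul_of_nonneg_left (min_le_left _ _) (le_max_right _ _)

lemma gainP_eq_sub (hvol : 2 * r / σ ^ 2 ≤ 1) (hL : 0 < L) (hLy : L ≤ y) (hyK : y ≤ K) :
    gainP r σ L K y = K - y := by
  rw [gainP, Zp_eq_one hvol hL hLy, mul_one, max_eq_left (sub_nonneg.2 hyK)]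

theorem exists_harmonicFun_majorant (hβ : 0 < 2 * r / σ ^ 2) (hvol : 2 * r / σ ^ 2 ≤ 1)
    (hb : b * (1 + 2 * r / σ ^ 2) = 2 * r / σ ^ 2 * K) (hL : 0 < L) (hLb : L ≤ b) (hz : 0 < z)
    (hzb : z ≤ b) :
    ∃ A B, 0 ≤ A ∧ 0 ≤ B ∧ A + B = gainP r σ L K z ∧
      ∀ y, 0 < y → gainP r σ L K y ≤ harmonicFun (2 * r / σ ^ 2) z A B y := by
  set β := 2 * r / σ ^ 2
  have h2bK : 2 * b ≤ K := two_mul_le_of_mul_one_add_eq hβ hvol (hL.le.trans hLb) hb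
  have hbK : b ≤ K := by linarith
  have hzK : z ≤ K := hzb.trans hbK
  obtain hLz | hzL := le_total L z
  · refine ⟨K - b, b - z, sub_nonneg.2 hbK, sub_nonneg.2 hzb, ?_, fun y hy => ?_⟩
    · rw [gainP_eq_sub hvol hL hLz hzK]
      ring
    · exact gainP_le_max.trans (max_sub_zero_le_harmonicFun hβ.le hb hbK hz hzb hy)
  · refine ⟨(z / L) ^ (1 - β) * ((β * (K - z) + z) / (1 + β)),
      (z / L) ^ (1 - β) * ((K - 2 * z) / (1 + β)), ?_, ?_, ?_, fun y hy => ?_⟩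
    · have := sub_nonneg.2 hzK
      positivity
    · have : 0 ≤ K - 2 * z := by linarith
      positivity
    · rw [gainP, Zp_eq_rpow hvol hL hz hzL, max_eq_left (sub_nonneg.2 hzK)]
      field_simp
      ring
    · rw [← mul_harmonicFun]
      exact gainP_le_mul_rpow.trans
        (max_sub_zero_mul_rpow_le_harmonicFun hβ.le hL hz (by linarith) hy)

end Gain

/-- The first passage time of the geometric Brownian motion at or below the level `b`, with the
value `∞` (where `hitTime` has the junk value `0`) on the paths that never get there. -/
def firstPassage {Ω : Type} (r σ x b : ℝ) (W : ℝ → Ω → ℝ) : Ω → ℝ≥0∞ :=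
  hittingAfter (fun t : ℝ≥0 => GBM r σ x W t) (Iic b) 0

/-- The expected discounted gain `E[e^{-rτ} G(X^x_τ)]` of stopping at `τ`, with payoff `0` on
`{τ = ∞}`; `valueP` is its supremum over stopping times. -/
def expectedPayoff {Ω : Type} [MeasurableSpace Ω] (P : Measure Ω) (W : ℝ → Ω → ℝ)
    (r σ L K x : ℝ) (τ : Ω → ℝ≥0∞) : ℝ :=
  ∫ ω in {ω | τ ω ≠ ∞}, exp (-r * (τ ω).toReal) * gainP r σ L K (GBM r σ x W (τ ω).toReal ω) ∂P

section FirstPassage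

variable {Ω : Type} {r σ x b : ℝ} {W : ℝ → Ω → ℝ}

lemma toReal_firstPassage (ω : Ω) : (firstPassage r σ x b W ω).toReal = hitTime r σ x b W ω := by
  have himage : {t : ℝ | 0 ≤ t ∧ GBM r σ x W t ω ≤ b} =
      (↑) '' {t : ℝ≥0 | 0 ≤ t ∧ GBM r σ x W t ω ≤ b} := by
    ext t
    exact ⟨fun h => ⟨⟨t, h.1⟩, h, rfl⟩, fun ⟨_, hs, hst⟩ => hst ▸ hs⟩
  rw [hitTime, himage, ← NNReal.coe_sInf, ENNReal.toReal, NNReal.coe_inj]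
  by_cases hex : ∃ t : ℝ≥0, 0 ≤ t ∧ GBM r σ x W t ω ≤ b
  · have hcoe : firstPassage r σ x b W ω =
        (sInf {t : ℝ≥0 | 0 ≤ t ∧ GBM r σ x W t ω ≤ b} : ℝ≥0) := by
      classical exact if_pos hex
    rw [hcoe, ENNReal.toNNReal_coe]
  · have htop : firstPassage r σ x b W ω = ∞ := by
      classical exact if_neg hex
    push Not at hex
    have hempty : {t : ℝ≥0 | 0 ≤ t ∧ GBM r σ x W t ω ≤ b} = ∅ :=
      eq_empty_of_forall_notMem fun t ht => (hex t ht.1).not_ge ht.2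
    rw [htop, hempty, ENNReal.toNNReal_top, NNReal.sInf_empty]

end FirstPassage

namespace IsStdBM

variable {Ω : Type} {mΩ : MeasurableSpace Ω} {P : Measure Ω} {F : Filtration ℝ mΩ}
  {W : ℝ → Ω → ℝ} {r σ x b L K β z A B : ℝ}

lemma isStoppingTimeE_firstPassage (hW : IsStdBM P F W) :
    IsStoppingTimeE F (firstPassage r σ x b W) :=
  isStoppingTimeE_iff.2 <|
    isStoppingTime_hittingAfter_of_continuous hW.adapted_GBM hW.continuous_GBM isClosed_Iic 0

lemma firstPassage_eq_zero (hW : IsStdBM P F W) (hxb : x ≤ b) (ω : Ω) :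
    firstPassage r σ x b W ω = 0 :=
  le_antisymm (hittingAfter_le_of_mem le_rfl ((hW.GBM_zero ω).trans_le hxb)) zero_le

lemma GBM_firstPassage (hW : IsStdBM P F W) (hbx : b ≤ x) {ω : Ω}
    (hfin : firstPassage r σ x b W ω ≠ ∞) :
    GBM r σ x W (firstPassage r σ x b W ω).toReal ω = b :=
  apply_eq_of_hittingAfter_Iic_eq_coe (ι := ℝ≥0) (hW.continuous_GBM ω)
    (hbx.trans_eq (hW.GBM_zero ω).symm) (ENNReal.coe_toNNReal hfin).symm

lemma le_GBM_of_le_firstPassage (hW : IsStdBM P F W) (hbx : b ≤ x) {ω : Ω} {t : ℝ≥0}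
    (ht : t ≤ firstPassage r σ x b W ω) : b ≤ GBM r σ x W t ω :=
  le_apply_of_le_hittingAfter_Iic (ι := ℝ≥0) (hW.continuous_GBM ω)
    (hbx.trans_eq (hW.GBM_zero ω).symm) zero_le ht

variable [IsProbabilityMeasure P]

lemma ae_firstPassage_ne_top (hW : IsStdBM P F W) (hσ : 0 < σ) (hvol : 2 * r < σ ^ 2) (hx : 0 < x)
    (hb : 0 < b) : ∀ᵐ ω ∂P, firstPassage r σ x b W ω ≠ ∞ := by
  filter_upwards [hW.ae_exists_GBM_le hσ hvol hx hb] with ω ⟨t, ht⟩ htop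
  exact hittingAfter_eq_top_iff.1 htop t zero_le ht

lemma restrict_firstPassage_ne_top (hW : IsStdBM P F W) (hσ : 0 < σ) (hvol : 2 * r < σ ^ 2)
    (hx : 0 < x) (hb : 0 < b) : P.restrict {ω | firstPassage r σ x b W ω ≠ ∞} = P :=
  Measure.restrict_eq_self_of_ae_mem (hW.ae_firstPassage_ne_top hσ hvol hx hb)

lemma expectedPayoff_le_harmonicFun (hW : IsStdBM P F W) (hβ : β * σ ^ 2 = 2 * r) (hL : 0 < L)
    (hx : 0 < x) (hz : 0 < z) (hA : 0 ≤ A) (hB : 0 ≤ B)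
    (hmaj : ∀ y, 0 < y → gainP r σ L K y ≤ harmonicFun β z A B y) {τ : Ω → ℝ≥0∞}
    (hτ : IsStoppingTimeE F τ) : expectedPayoff P W r σ L K x τ ≤ harmonicFun β z A B x := by
  have hGBM (t : ℝ) (ω : Ω) : 0 < GBM r σ x W t ω := GBM_pos hx t ω
  obtain ⟨hint, hle⟩ := setIntegral_stopped_le_of_nonneg
    (hW.martingale_discounted_harmonicFun hβ hx hz A B)
    (fun ω t => (hW.continuous_discounted_harmonicFun hβ hx hz A B ω).continuousWithinAt)
    (fun t ω => mul_nonneg (exp_pos _).le (harmonicFun_nonneg hz hA hB (hGBM t ω).le))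
    (isStoppingTimeE_iff.1 hτ)
  have hinit : ∫ ω, exp (-r * (0 : ℝ≥0)) * harmonicFun β z A B (GBM r σ x W (0 : ℝ≥0) ω) ∂P =
      harmonicFun β z A B x := by
    simp [hW.GBM_zero]
  refine (integral_mono_of_nonneg (.of_forall fun ω => ?_) hint (.of_forall fun ω => ?_)).trans
    (hle.trans_eq hinit)
  · exact mul_nonneg (exp_pos _).le (gainP_nonneg hL (hGBM _ ω))
  · exact mul_le_mul_of_nonneg_left (hmaj _ (hGBM _ ω)) (exp_pos _).le

theorem valueP_eq_expectedPayoff_of_majorant (hW : IsStdBM P F W) (hβ : β * σ ^ 2 = 2 * r)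
    (hL : 0 < L) (hx : 0 < x) (hz : 0 < z) (hA : 0 ≤ A) (hB : 0 ≤ B)
    (hmaj : ∀ y, 0 < y → gainP r σ L K y ≤ harmonicFun β z A B y) {τ : Ω → ℝ≥0∞}
    (hτ : IsStoppingTimeE F τ) (hopt : expectedPayoff P W r σ L K x τ = harmonicFun β z A B x) :
    valueP P F W r σ L K x = expectedPayoff P W r σ L K x τ := by
  have hle (θ : {θ : Ω → ℝ≥0∞ // IsStoppingTimeE F θ}) :
      expectedPayoff P W r σ L K x θ ≤ expectedPayoff P W r σ L K x τ :=
    hopt ▸ hW.expectedPayoff_le_harmonicFun hβ hL hx hz hA hB hmaj θ.2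
  have : Nonempty {θ : Ω → ℝ≥0∞ // IsStoppingTimeE F θ} := ⟨τ, hτ⟩
  exact le_antisymm (ciSup_le hle) (le_ciSup ⟨_, forall_mem_range.2 hle⟩ ⟨τ, hτ⟩)

lemma expectedPayoff_firstPassage (hW : IsStdBM P F W) (hσ : 0 < σ) (hvol : 2 * r < σ ^ 2)
    (hx : 0 < x) (hb : 0 < b) :
    expectedPayoff P W r σ L K x (firstPassage r σ x b W) =
      ∫ ω, exp (-r * hitTime r σ x b W ω) *
        gainP r σ L K (GBM r σ x W (hitTime r σ x b W ω) ω) ∂P := by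
  rw [expectedPayoff, hW.restrict_firstPassage_ne_top hσ hvol hx hb]
  simp only [toReal_firstPassage]

lemma expectedPayoff_firstPassage_of_le (hW : IsStdBM P F W) (hxb : x ≤ b) :
    expectedPayoff P W r σ L K x (firstPassage r σ x b W) = gainP r σ L K x := by
  simp [expectedPayoff, hW.firstPassage_eq_zero hxb, hW.GBM_zero]

lemma integral_exp_neg_mul_firstPassage (hW : IsStdBM P F W) (hβ : β * σ ^ 2 = 2 * r)
    (hr : 0 ≤ r) (hσ : 0 < σ) (hvol : 2 * r < σ ^ 2) (hb : 0 < b) (hbx : b ≤ x) :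
    ∫ ω, exp (-r * (firstPassage r σ x b W ω).toReal) ∂P = (x / b) ^ (-β) := by
  have hx := hb.trans_le hbx
  have hβ0 : 0 ≤ β := nonneg_of_mul_nonneg_left (hβ ▸ by positivity) (by positivity : 0 < σ ^ 2)
  have hfin := hW.ae_firstPassage_ne_top hσ hvol hx hb
  have hmart := integral_stopped_eq_of_dominated
    (hW.martingale_discounted_harmonicFun hβ hx hb 1 0)
    (fun ω t => (hW.continuous_discounted_harmonicFun hβ hx hb 1 0 ω).continuousWithinAt)
    (isStoppingTimeE_iff.1 hW.isStoppingTimeE_firstPassage) hfin (integrable_const 1)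
    fun ω t ht => ?_
  · calc ∫ ω, exp (-r * (firstPassage r σ x b W ω).toReal) ∂P
        = ∫ ω, exp (-r * (firstPassage r σ x b W ω).toReal) * harmonicFun β b 1 0
            (GBM r σ x W (firstPassage r σ x b W ω).toReal ω) ∂P := by
          refine integral_congr_ae (hfin.mono fun ω hω => ?_)
          simp only [hW.GBM_firstPassage hbx hω, harmonicFun_self hb.ne', add_zero, mul_one]
      _ = (x / b) ^ (-β) := by
          refine hmart.trans ?_
          simp [hW.GBM_zero, harmonicFun]
  · have hbGBM := hW.le_GBM_of_le_firstPassage hbx ht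
    have hnonneg : 0 ≤ harmonicFun β b 1 0 (GBM r σ x W t ω) :=
      harmonicFun_nonneg hb zero_le_one le_rfl (hb.le.trans hbGBM)
    rw [norm_of_nonneg (mul_nonneg (exp_pos _).le hnonneg)]
    refine mul_le_one₀ (exp_le_one_iff.2 ?_) hnonneg
      (harmonicFun_zero_right_le hβ0 hb zero_le_one hbGBM)
    exact mul_nonpos_of_nonpos_of_nonneg (neg_nonpos.2 hr) t.coe_nonneg

lemma expectedPayoff_firstPassage_of_ge (hW : IsStdBM P F W) (hβ : β * σ ^ 2 = 2 * r)
    (hr : 0 ≤ r) (hσ : 0 < σ) (hvol : 2 * r < σ ^ 2) (hb : 0 < b) (hbx : b ≤ x) :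
    expectedPayoff P W r σ L K x (firstPassage r σ x b W) =
      gainP r σ L K b * (x / b) ^ (-β) := by
  have hx := hb.trans_le hbx
  rw [expectedPayoff, hW.restrict_firstPassage_ne_top hσ hvol hx hb,
    ← hW.integral_exp_neg_mul_firstPassage hβ hr hσ hvol hb hbx, ← integral_const_mul]
  refine integral_congr_ae ((hW.ae_firstPassage_ne_top hσ hvol hx hb).mono fun ω hω => ?_)
  simp only [hW.GBM_firstPassage hbx hω, mul_comm]

theorem valueP_eq_expectedPayoff_firstPassage (hW : IsStdBM P F W) (hr : 0 < r) (hσ : 0 < σ)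
    (hL : 0 < L) (hvol : 2 * r < σ ^ 2) (hb : b * (1 + 2 * r / σ ^ 2) = 2 * r / σ ^ 2 * K)
    (hLb : L ≤ b) (hx : 0 < x) :
    valueP P F W r σ L K x = expectedPayoff P W r σ L K x (firstPassage r σ x b W) := by
  have hβ : 2 * r / σ ^ 2 * σ ^ 2 = 2 * r := div_mul_cancel₀ _ (by positivity)
  have hβ0 : 0 < 2 * r / σ ^ 2 := by positivity
  have hβ1 : 2 * r / σ ^ 2 ≤ 1 := ((div_lt_one (by positivity)).2 hvol).le
  have hb0 : 0 < b := hL.trans_le hLb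
  have hbK : b ≤ K := by linarith [two_mul_le_of_mul_one_add_eq hβ0 hβ1 hb0.le hb]
  obtain hxb | hbx := le_total x b
  · obtain ⟨A, B, hA, hB, hAB, hmaj⟩ := exists_harmonicFun_majorant hβ0 hβ1 hb hL hLb hx hxb
    refine hW.valueP_eq_expectedPayoff_of_majorant hβ hL hx hx hA hB hmaj
      hW.isStoppingTimeE_firstPassage ?_
    rw [hW.expectedPayoff_firstPassage_of_le hxb, harmonicFun_self hx.ne', hAB]
  · refine hW.valueP_eq_expectedPayoff_of_majorant (A := K - b) (B := b - b) hβ hL hx hb0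
      (sub_nonneg.2 hbK) (sub_self b).ge
      (fun y hy => gainP_le_max.trans (max_sub_zero_le_harmonicFun hβ0.le hb hbK hb0 le_rfl hy))
      hW.isStoppingTimeE_firstPassage ?_
    rw [hW.expectedPayoff_firstPassage_of_ge hβ hr.le hσ hvol hb0 hbx,
      gainP_eq_sub hβ1 hL hLb hbK, harmonicFun, sub_self, zero_mul, add_zero]

end IsStdBM

/-- Assume `2r < σ²` and `2rK > L(σ² + 2r)`, and set
`b = 2rK/(2r + σ²)` (so that `b > L`). Then the perpetual value function is given
explicitly by `V(x) = G(x)` for `x ∈ (0, b)` and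
`V(x) = (K − b)·b^{2r/σ²}·x^{−2r/σ²}` for `x ∈ [b, ∞)`; moreover the stopping time
`τ_b = inf{t ≥ 0 : X^x_t ≤ b}` is optimal, i.e. `V(x) = E[e^{−r·τ_b} G(X^x_{τ_b})]`
for every `x > 0`. -/
theorem stmt_5 {Ω : Type} [mΩ : MeasurableSpace Ω] (P : Measure Ω) [IsProbabilityMeasure P]
    (F : Filtration ℝ mΩ) (W : ℝ → Ω → ℝ) (hW : IsStdBM P F W)
    (r σ L K : ℝ) (hr : 0 < r) (hσ : 0 < σ) (hL : 0 < L) (hLK : L < K)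
    (hvol : 2 * r < σ ^ 2) (hbL : 2 * r * K > L * (σ ^ 2 + 2 * r)) :
    let b : ℝ := 2 * r * K / (2 * r + σ ^ 2)
    (∀ x ∈ Ioo (0 : ℝ) b, valueP P F W r σ L K x = gainP r σ L K x) ∧
    (∀ x ∈ Ici b,
      valueP P F W r σ L K x =
        (K - b) * b ^ (2 * r / σ ^ 2) * x ^ (-(2 * r) / σ ^ 2)) ∧
    (∀ x : ℝ, 0 < x →
      valueP P F W r σ L K x =
        ∫ ω, Real.exp (-r * hitTime r σ x b W ω) *
          gainP r σ L K (GBM r σ x W (hitTime r σ x b W ω) ω) ∂P) := by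
  intro b
  have hβ : 2 * r / σ ^ 2 * σ ^ 2 = 2 * r := div_mul_cancel₀ _ (by positivity)
  have hβ0 : 0 < 2 * r / σ ^ 2 := by positivity
  have hβ1 : 2 * r / σ ^ 2 ≤ 1 := ((div_lt_one (by positivity)).2 hvol).le
  have hb : b * (1 + 2 * r / σ ^ 2) = 2 * r / σ ^ 2 * K := by
    simp only [b]
    field_simp
    ring
  have hLb : L < b := (lt_div_iff₀ (by positivity)).2 (by linarith)
  have hb0 : 0 < b := hL.trans hLb
  have hbK : b ≤ K := by linarith [two_mul_le_of_mul_one_add_eq hβ0 hβ1 hb0.le hb]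
  have hopt {x : ℝ} (hx : 0 < x) :=
    hW.valueP_eq_expectedPayoff_firstPassage hr hσ hL hvol hb hLb.le hx
  refine ⟨fun x hx => ?_, fun x hx => ?_, fun x hx => ?_⟩
  · rw [hopt hx.1, hW.expectedPayoff_firstPassage_of_le hx.2.le]
  · have hx0 : 0 < x := hb0.trans_le hx
    rw [hopt hx0, hW.expectedPayoff_firstPassage_of_ge hβ hr.le hσ hvol hb0 hx,
      gainP_eq_sub hβ1 hL hLb.le hbK, neg_div, div_rpow hx0.le hb0.le, rpow_neg hb0.le,
      div_inv_eq_mul, mul_comm (x ^ _), mul_assoc]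
  · rw [hopt hx, hW.expectedPayoff_firstPassage hσ hvol hx hb0]

end
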